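/- Let p : List Γ → ℝ and let w : List Γ have length l. Then the total unnormalized subword weight satisfies Σ_{0 ≤ i < j ≤ l} p(w[i+1:j]) · B(w.take i) · B(w.drop j) = Σ_{g ∈ Seg(w)} (Π_{s ∈ g} p(s)) · |g|, i.e. the sum over all substring positions of the weights ã computed by Algorithm 1 equals the sum over all segmentations of the segmentation weight times the number of segments in that segmentation. (Normalization identity underlying line 12 of Algorithm 1; the scalar specialization of the weighted-subword identity.) -/

import Mathlib

open scoped Classical

variable {Γ : Type*}

/-- A segmentation of a word `w` is a list of nonempty subwords whose concatenation is `w`. -/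
def Seg (w : List Γ) : Set (List (List Γ)) :=
  {g | (∀ s ∈ g, s ≠ []) ∧ g.flatten = w}

theorem Seg.finite (w : List Γ) : (Seg w).Finite := by
  apply Set.Finite.subset
    (Set.finite_range fun c : Composition w.length => w.splitWrtComposition c)
  rintro g ⟨hne, hjoin⟩
  subst hjoin
  have hpos : ∀ {i : ℕ}, i ∈ g.map List.length → 0 < i := by
    intro i hi
    simp only [List.mem_map] at hi
    obtain ⟨s, hs, rfl⟩ := hi
    exact List.length_pos_iff.mpr (hne s hs)
  refine ⟨⟨g.map List.length, hpos, by simp⟩, ?_⟩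
  exact (List.splitWrtComposition_flatten g ⟨g.map List.length, hpos, by simp⟩ rfl)

/-- The (finite) set of segmentations of `w`, as a `Finset`. -/
noncomputable def SegF (w : List Γ) : Finset (List (List Γ)) := (Seg.finite w).toFinset

/-- Total segmentation weight `B(u) = Σ_{g ∈ Seg(u)} Π_{s ∈ g} p(s)`. -/
noncomputable def B (p : List Γ → ℝ) (u : List Γ) : ℝ :=
  ∑ g ∈ SegF u, (g.map p).prod

theorem mem_SegF {w : List Γ} {g : List (List Γ)} :
    g ∈ SegF w ↔ (∀ s ∈ g, s ≠ []) ∧ g.flatten = w := by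
  simp [SegF, Seg]

theorem split_at_index (g : List (List Γ)) (k : ℕ) (hk : k < g.length) :
    g = g.take k ++ g[k] :: g.drop (k + 1) := by
  simp

/-- Normalization identity (line 12 of Algorithm 1): the total unnormalized subword
weight equals the sum over segmentations of the segmentation weight times the
number of segments. -/
theorem total_subword_weight (p : List Γ → ℝ) (w : List Γ) :
    ∑ q ∈ (Finset.range (w.length + 1) ×ˢ Finset.range (w.length + 1)).filter
        (fun q => q.1 < q.2),
        p ((w.drop q.1).take (q.2 - q.1)) * B p (w.take q.1) * B p (w.drop q.2)
      = ∑ g ∈ SegF w, (g.map p).prod * (g.length : ℝ) := by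
  have hL : ∀ q : ℕ × ℕ,
      p ((w.drop q.1).take (q.2 - q.1)) * B p (w.take q.1) * B p (w.drop q.2)
      = ∑ x ∈ SegF (w.take q.1) ×ˢ SegF (w.drop q.2),
        p ((w.drop q.1).take (q.2 - q.1)) * (x.1.map p).prod * (x.2.map p).prod := by
    intro q
    rw [Finset.sum_product, B, B, mul_assoc, Finset.sum_mul_sum, Finset.mul_sum]
    refine Finset.sum_congr rfl fun a _ => ?_
    rw [Finset.mul_sum]
    exact Finset.sum_congr rfl fun b _ => by ring
  have hR : ∀ g : List (List Γ), (g.map p).prod * (g.length : ℝ)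
      = ∑ k ∈ Finset.range g.length, (g.map p).prod := by
    intro g
    simp [mul_comm]
  rw [Finset.sum_congr rfl fun q _ => hL q, Finset.sum_congr rfl fun g _ => hR g,
    Finset.sum_sigma', Finset.sum_sigma']
  symm
  refine Finset.sum_bij'
    (fun x _ => ⟨((x.1.take x.2).flatten.length, (x.1.take (x.2 + 1)).flatten.length),
      (x.1.take x.2, x.1.drop (x.2 + 1))⟩)
    (fun y _ => ⟨y.2.1 ++ (w.drop y.1.1).take (y.1.2 - y.1.1) :: y.2.2, y.2.1.length⟩)
    ?_ ?_ ?_ ?_ ?_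
  · rintro ⟨g, k⟩ h
    simp only [Finset.mem_sigma, mem_SegF, Finset.mem_range] at h
    obtain ⟨⟨hne, rfl⟩, hk⟩ := h
    obtain ⟨a, s, b, rfl, rfl⟩ : ∃ a s b, g = a ++ s :: b ∧ k = a.length :=
      ⟨g.take k, g[k], g.drop (k + 1), split_at_index g k hk, by simp; omega⟩
    have hs : 0 < s.length := List.length_pos_iff.mpr (hne s (by simp))
    have e1 : (a ++ s :: b).take (a.length + 1) = a ++ [s] := by simp [List.take_append]
    have e2 : (a ++ s :: b).drop (a.length + 1) = b := by simp [List.drop_append]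
    have e3 : (a ++ s :: b).take a.length = a := by simp
    have e4 : (a ++ s :: b).flatten = (a.flatten ++ s) ++ b.flatten := by simp
    have e5 : (a ++ [s]).flatten = a.flatten ++ s := by simp
    simp only [Finset.mem_sigma, mem_SegF, Finset.mem_filter, Finset.mem_product,
      Finset.mem_range, e1, e2, e3, e4, e5]
    refine ⟨⟨⟨?_, ?_⟩, ?_⟩, ⟨?_, ?_⟩, ?_, ?_⟩
    · simp only [List.length_append]; omega
    · simp only [List.length_append]; omega
    · simp only [List.length_append]; omega
    · exact fun t ht => hne t (by simp [ht])
    · rw [List.append_assoc, List.take_left]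
    · exact fun t ht => hne t (by simp [ht])
    · rw [List.drop_left]
  · rintro ⟨⟨i, j⟩, a, b⟩ h
    simp only [Finset.mem_sigma, mem_SegF, Finset.mem_filter, Finset.mem_product,
      Finset.mem_range] at h ⊢
    obtain ⟨⟨⟨hi, hj⟩, hij⟩, ⟨ha, ha'⟩, hb, hb'⟩ := h
    refine ⟨⟨?_, ?_⟩, by simp⟩
    · intro t ht
      rw [List.mem_append, List.mem_cons] at ht
      rcases ht with ht | rfl | ht
      · exact ha t ht
      · rw [← List.length_pos_iff]; simp; omega
      · exact hb t ht
    · rw [List.flatten_append, List.flatten_cons, ha', hb']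
      have : w.drop j = (w.drop i).drop (j - i) := by
        rw [List.drop_drop]; congr 1; omega
      rw [this, List.take_append_drop, List.take_append_drop]
  · rintro ⟨g, k⟩ h
    simp only [Finset.mem_sigma, mem_SegF, Finset.mem_range] at h
    obtain ⟨⟨hne, rfl⟩, hk⟩ := h
    obtain ⟨a, s, b, rfl, rfl⟩ : ∃ a s b, g = a ++ s :: b ∧ k = a.length :=
      ⟨g.take k, g[k], g.drop (k + 1), split_at_index g k hk, by simp; omega⟩
    have e1 : (a ++ s :: b).take (a.length + 1) = a ++ [s] := by simp [List.take_append]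
    have e2 : (a ++ s :: b).drop (a.length + 1) = b := by simp [List.drop_append]
    have e3 : (a ++ s :: b).take a.length = a := by simp
    have e4 : (a ++ s :: b).flatten = a.flatten ++ (s ++ b.flatten) := by simp
    have e5 : (a ++ [s]).flatten = a.flatten ++ s := by simp
    simp only [e1, e2, e3, e4, e5, List.drop_left, List.length_append,
      Nat.add_sub_cancel_left, List.take_left]
  · rintro ⟨⟨i, j⟩, a, b⟩ h
    simp only [Finset.mem_sigma, mem_SegF, Finset.mem_filter, Finset.mem_product,
      Finset.mem_range] at h
    obtain ⟨⟨⟨hi, hj⟩, hij⟩, ⟨ha, ha'⟩, hb, hb'⟩ := h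
    have e1 : ∀ s, (a ++ s :: b).take (a.length + 1) = a ++ [s] := by
      simp [List.take_append]
    have e2 : ∀ s, (a ++ s :: b).drop (a.length + 1) = b := by simp [List.drop_append]
    have e3 : ∀ s, (a ++ s :: b).take a.length = a := by simp
    have e5 : ∀ s, (a ++ [s]).flatten = a.flatten ++ s := by simp
    simp only [e1, e2, e3, e5, ha', List.length_append, List.length_take, List.length_drop]
    have h1 : min i w.length = i := by omega
    have h2 : i + min (j - i) (w.length - i) = j := by omega
    rw [h1, h2]
  · rintro ⟨g, k⟩ h
    simp only [Finset.mem_sigma, mem_SegF, Finset.mem_range] at h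
    obtain ⟨⟨hne, rfl⟩, hk⟩ := h
    obtain ⟨a, s, b, rfl, rfl⟩ : ∃ a s b, g = a ++ s :: b ∧ k = a.length :=
      ⟨g.take k, g[k], g.drop (k + 1), split_at_index g k hk, by simp; omega⟩
    have e1 : (a ++ s :: b).take (a.length + 1) = a ++ [s] := by simp [List.take_append]
    have e2 : (a ++ s :: b).drop (a.length + 1) = b := by simp [List.drop_append]
    have e3 : (a ++ s :: b).take a.length = a := by simp
    have e4 : (a ++ s :: b).flatten = a.flatten ++ (s ++ b.flatten) := by simp
    have e5 : (a ++ [s]).flatten = a.flatten ++ s := by simp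
    simp only [e1, e2, e3, e4, e5, List.drop_left, List.length_append,
      Nat.add_sub_cancel_left, List.take_left, List.map_append, List.map_cons,
      List.prod_append, List.prod_cons]
    ring
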